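/- Let T₁ be a ℂ-linear involution of ℂⁿ, ρ a conjugate-linear involution of ℂⁿ, T₂ := ρ∘T₁∘ρ, and S := T₁∘T₂. Then: (a) if u is an eigenvector of S with eigenvalue κ, then T₁u is an eigenvector of S with eigenvalue κ^{−1} and ρu is an eigenvector of S with eigenvalue (conj κ)^{−1}; in particular, the set of eigenvalues of S is invariant under κ ↦ κ^{−1} and under κ ↦ (conj κ)^{−1}. (b) If moreover S has n distinct eigenvalues, then every real eigenvalue of S is positive; in particular, −1 is not an eigenvalue of S. -/

import Mathlib

/-!
Both `T₁` and `ρ` conjugate `S = T₁ ρ T₁ ρ` to its inverse, and a `σ`-semilinear map doing so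
carries `κ`-eigenvectors to `(σ κ)⁻¹`-eigenvectors. For positivity, `S` is the square of the
conjugate-linear map `A = T₁ ρ`. If `κ` is real, `A` preserves the `κ`-eigenspace; when that
eigenspace is a line spanned by `u`, this gives `A u = c u` and hence `κ = (conj c) c`.
-/

open Module Module.End

section Reversing

variable {K V : Type*} [Field K] [AddCommGroup V] [Module K V] {σ : K →+* K}
  {S : End K V} {B : V →ₛₗ[σ] V} {κ : K}

/-- `B` reverses `S` if `S B S = B`. For invertible `B` this is the notion of a reversing symmetry
from dynamics, `B S B⁻¹ = S⁻¹`, written without inverses. -/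
def Reverses (B : V →ₛₗ[σ] V) (S : End K V) : Prop :=
  ∀ v, S (B (S v)) = B v

theorem Reverses.ne_zero_of_hasEigenvalue (hBS : Reverses B S) (hB : Function.Injective B)
    (hκ : S.HasEigenvalue κ) : κ ≠ 0 := by
  rintro rfl
  obtain ⟨u, hu⟩ := hκ.exists_hasEigenvector
  have hSu : S u = 0 := by rw [hu.apply_eq_smul, zero_smul]
  have hBu : B u = 0 := by rw [← hBS u, hSu, map_zero, map_zero]
  exact hu.2 ((map_eq_zero_iff B hB).mp hBu)

theorem Reverses.hasEigenvector (hBS : Reverses B S) (hB : Function.Injective B) {u : V}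
    (hu : S.HasEigenvector κ u) : S.HasEigenvector (σ κ)⁻¹ (B u) := by
  have hκ : κ ≠ 0 := hBS.ne_zero_of_hasEigenvalue hB (hasEigenvalue_of_hasEigenvector hu)
  have hSBu : σ κ • S (B u) = B u := by
    rw [← map_smul, ← map_smulₛₗ, ← hu.apply_eq_smul, hBS]
  refine ⟨mem_eigenspace_iff.mpr ?_, (map_ne_zero_iff B hB).mpr hu.2⟩
  exact (eq_inv_smul_iff₀ ((map_ne_zero σ).mpr hκ)).mpr hSBu

theorem Reverses.hasEigenvalue (hBS : Reverses B S) (hB : Function.Injective B)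
    (hκ : S.HasEigenvalue κ) : S.HasEigenvalue (σ κ)⁻¹ :=
  let ⟨_, hu⟩ := hκ.exists_hasEigenvector
  hasEigenvalue_of_hasEigenvector (hBS.hasEigenvector hB hu)

end Reversing

section SimpleEigenvalues

variable {K V : Type*} [Field K] [AddCommGroup V] [Module K V]

theorem exists_map_mul_self_eq_of_finrank_eigenspace_eq_one {σ : K →+* K} {A : V →ₛₗ[σ] V}
    {S : End K V} (hS : ∀ v, S v = A (A v)) {κ : K} (hσκ : σ κ = κ)
    (hκ : finrank K (S.eigenspace κ) = 1) : ∃ c, σ c * c = κ := by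
  obtain ⟨⟨u, hu⟩, hu₀, hspan⟩ := finrank_eq_one_iff'.mp hκ
  rw [mem_eigenspace_iff] at hu
  have hAu : A u ∈ S.eigenspace κ := by
    rw [mem_eigenspace_iff, hS, ← hS u, hu, map_smulₛₗ, hσκ]
  obtain ⟨c, hc⟩ := hspan ⟨A u, hAu⟩
  replace hc : A u = c • u := (congrArg Subtype.val hc).symm
  refine ⟨c, smul_left_injective K (by simpa using hu₀ : u ≠ 0) ?_⟩
  calc (σ c * c) • u = A (A u) := by rw [hc, map_smulₛₗ, hc, smul_smul]
    _ = κ • u := by rw [← hS, hu]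

theorem finrank_eigenspace_eq_one_of_injective [FiniteDimensional K V] {f : End K V}
    {ι : Type*} [Fintype ι] (hι : Fintype.card ι = finrank K V) {μ : ι → K}
    (hμ : Function.Injective μ) (hfμ : ∀ i, f.HasEigenvalue (μ i)) {κ : K}
    (hκ : f.HasEigenvalue κ) : finrank K (f.eigenspace κ) = 1 := by
  classical
  have hroots : f.charpoly.roots = (Finset.univ.image μ).val := by
    refine Polynomial.roots_eq_of_natDegree_le_card_of_ne_zero ?_ ?_ f.charpoly_monic.ne_zero
    · exact Finset.forall_mem_image.mpr fun i _ =>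
        (hasEigenvalue_iff_isRoot_charpoly f (μ i)).mp (hfμ i)
    · rw [Finset.card_image_of_injective _ hμ, Finset.card_univ, hι, f.charpoly_natDegree]
  apply le_antisymm
  · grw [LinearMap.finrank_eigenspace_le, ← Polynomial.count_roots, hroots]
    exact Multiset.nodup_iff_count_le_one.mp (Finset.nodup _) κ
  · exact Submodule.one_le_finrank_iff.mpr hκ

end SimpleEigenvalues

theorem stmt_5_general {K V : Type*} [Field K] [PartialOrder K] [StarRing K] [StarOrderedRing K]
    [AddCommGroup V] [Module K V] (T₁ : End K V) (hT₁ : Function.Involutive T₁)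
    (ρ : V →ₛₗ[starRingEnd K] V) (hρ : Function.Involutive ρ)
    (S : End K V) (hS : ∀ v, S v = T₁ (ρ (T₁ (ρ v)))) :
    (∀ κ u, S.HasEigenvector κ u →
      S.HasEigenvector κ⁻¹ (T₁ u) ∧ S.HasEigenvector (starRingEnd K κ)⁻¹ (ρ u)) ∧
    (∀ κ, S.HasEigenvalue κ → S.HasEigenvalue κ⁻¹ ∧ S.HasEigenvalue (starRingEnd K κ)⁻¹) ∧
    ∀ κ, IsSelfAdjoint κ → finrank K (S.eigenspace κ) = 1 → 0 < κ := by
  have hT₁S : Reverses T₁ S := fun v => by rw [hS v, hS, hT₁, hρ, hT₁, hρ]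
  have hρS : Reverses ρ S := fun v => by rw [hS v, hS, hρ, hT₁, hρ, hT₁]
  refine ⟨fun κ u hu => ⟨hT₁S.hasEigenvector hT₁.injective hu, hρS.hasEigenvector hρ.injective hu⟩,
    fun κ hκ => ⟨hT₁S.hasEigenvalue hT₁.injective hκ, hρS.hasEigenvalue hρ.injective hκ⟩,
    fun κ hκ hdim => ?_⟩
  obtain ⟨c, rfl⟩ := exists_map_mul_self_eq_of_finrank_eigenspace_eq_one
    (A := T₁.comp ρ) hS hκ.star_eq hdim
  have hev : S.HasEigenvalue (star c * c) :=
    Submodule.nontrivial_iff_ne_bot.mp (nontrivial_of_finrank_pos (hdim ▸ one_pos))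
  exact (star_mul_self_nonneg c).lt_of_ne' (hT₁S.ne_zero_of_hasEigenvalue hT₁.injective hev)

/-- Let `T₁` be a ℂ-linear involution of `ℂⁿ`, `ρ` a conjugate-linear involution,
`T₂ = ρ∘T₁∘ρ` and `S = T₁∘T₂`. (a) If `u` is an eigenvector of `S` with eigenvalue `κ`, then
`T₁u` is an eigenvector with eigenvalue `κ⁻¹` and `ρu` an eigenvector with eigenvalue
`(conj κ)⁻¹`; in particular the set of eigenvalues of `S` is invariant under `κ ↦ κ⁻¹` and
`κ ↦ (conj κ)⁻¹`. (b) If `S` has `n` distinct eigenvalues then every real eigenvalue of `S`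
is positive; in particular `−1` is not an eigenvalue of `S`. -/
theorem stmt_5 (n : ℕ) (T₁ : (Fin n → ℂ) →ₗ[ℂ] (Fin n → ℂ))
    (hT₁ : ∀ v, T₁ (T₁ v) = v)
    (ρ : (Fin n → ℂ) → (Fin n → ℂ))
    (hρadd : ∀ v w, ρ (v + w) = ρ v + ρ w)
    (hρsmul : ∀ (c : ℂ) v, ρ (c • v) = (starRingEnd ℂ) c • ρ v)
    (hρinv : ∀ v, ρ (ρ v) = v)
    (S : Module.End ℂ (Fin n → ℂ))
    (hS : ∀ v, S v = T₁ (ρ (T₁ (ρ v)))) :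
    (∀ (κ : ℂ) (u : Fin n → ℂ), u ≠ 0 → S u = κ • u →
      (T₁ u ≠ 0 ∧ S (T₁ u) = κ⁻¹ • T₁ u) ∧
      (ρ u ≠ 0 ∧ S (ρ u) = ((starRingEnd ℂ) κ)⁻¹ • ρ u)) ∧
    (∀ κ : ℂ, Module.End.HasEigenvalue S κ →
      Module.End.HasEigenvalue S κ⁻¹ ∧
      Module.End.HasEigenvalue S ((starRingEnd ℂ) κ)⁻¹) ∧
    ((∃ μ : Fin n → ℂ, Function.Injective μ ∧ ∀ i, Module.End.HasEigenvalue S (μ i)) →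
      (∀ κ : ℝ, Module.End.HasEigenvalue S (κ : ℂ) → 0 < κ) ∧
      ¬ Module.End.HasEigenvalue S (-1)) := by
  open scoped ComplexOrder in
  obtain ⟨hvec, hval, hpos⟩ := stmt_5_general T₁ hT₁ ⟨⟨ρ, hρadd⟩, hρsmul⟩ hρinv S hS
  simp only [hasEigenvector_iff, mem_eigenspace_iff, and_comm (b := _ ≠ _), and_imp] at hvec
  refine ⟨hvec, hval, fun ⟨μ, hμ, hSμ⟩ => ?_⟩
  have hreal : ∀ κ : ℝ, S.HasEigenvalue (κ : ℂ) → 0 < κ := fun κ hκ =>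
    Complex.zero_lt_real.mp <| hpos κ (Complex.conj_ofReal κ) <|
      finrank_eigenspace_eq_one_of_injective (by simp) hμ hSμ hκ
  exact ⟨hreal, fun h => absurd (hreal (-1) (by simpa using h)) (by norm_num)⟩
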